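/- Assume M ≥ 2 and fix ε > 0. For an integer b and H ∈ 𝔥₁, call a prime q ∈ Q_H bad for b if |∑_{−Ky < n ≤ y} λ_b(H; q, n) − (K+1)y| > y/H^{1+ε}. There exist C > 0 and x₀ (depending only on δ, M, K, ξ, ε) such that for all x ≥ x₀ and every H ∈ 𝔥₁: E[∑_{n ∈ S_z(b) ∩ [1,y]} ∑_{q ∈ Q_H bad for b} ∑_{1 ≤ h ≤ KH} λ_b(H; q, n − qh)] ≤ C·y·#Q_H / H^{M−5−2ε}. -/

import Mathlib

open scoped Classical

noncomputable def yy (δ x : ℝ) : ℕ := ⌈x * Real.log x ^ δ⌉₊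

noncomputable def zz (δ x : ℝ) : ℝ :=
  (yy δ x : ℝ) * Real.log (Real.log x) ^ 2 / Real.log x ^ (1/2 : ℝ)

noncomputable def primesUpTo (t : ℝ) : Finset ℕ :=
  (Finset.range (⌊t⌋₊ + 1)).filter fun p => p.Prime ∧ (p : ℝ) ≤ t

noncomputable def PP (t : ℝ) : ℕ := ∏ p ∈ primesUpTo t, p

noncomputable def sigUpTo (t : ℝ) : ℝ := ∏ p ∈ primesUpTo t, (1 - 1 / (p : ℝ))

noncomputable def primesBetween (w t : ℝ) : Finset ℕ :=
  (Finset.range (⌊t⌋₊ + 1)).filter fun p => p.Prime ∧ w < (p : ℝ) ∧ (p : ℝ) ≤ t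

noncomputable def sigBetween (w t : ℝ) : ℝ := ∏ p ∈ primesBetween w t, (1 - 1 / (p : ℝ))

def inS (t : ℝ) (b n : ℤ) : Prop :=
  ∀ p : ℕ, p.Prime → (p : ℝ) ≤ t → ¬ ((p : ℤ) ∣ (n - b))

def inSBetween (w t : ℝ) (b n : ℤ) : Prop :=
  ∀ p : ℕ, p.Prime → w < (p : ℝ) → (p : ℝ) ≤ t → ¬ ((p : ℤ) ∣ (n - b))

noncomputable def countS (t : ℝ) (b lo hi : ℤ) : ℕ :=
  ((Finset.Icc lo hi).filter (inS t b)).card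

noncomputable def EE (δ x : ℝ) (g : ℤ → ℝ) : ℝ :=
  (1 / (PP (zz δ x) : ℝ)) * ∑ b ∈ Finset.range (PP (zz δ x)), g (b : ℤ)

def frakH (δ ξ x : ℝ) : Set ℝ :=
  {H | ∃ j : ℕ, H = ξ ^ j ∧ 2 * (yy δ x : ℝ) / x ≤ H ∧ H ≤ (yy δ x : ℝ) / (ξ * zz δ x)}

def frakH1 (δ ξ x : ℝ) : Set ℝ :=
  {H | ∃ j : ℕ, Even j ∧ H = ξ ^ j ∧ 2 * (yy δ x : ℝ) / x ≤ H ∧ H ≤ (yy δ x : ℝ) / (ξ * zz δ x)}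

def frakH2 (δ ξ x : ℝ) : Set ℝ :=
  {H | ∃ j : ℕ, Odd j ∧ H = ξ ^ j ∧ 2 * (yy δ x : ℝ) / x ≤ H ∧ H ≤ (yy δ x : ℝ) / (ξ * zz δ x)}

noncomputable def QH (δ ξ x H : ℝ) : Finset ℕ :=
  (Finset.range (⌊(yy δ x : ℝ) / H⌋₊ + 1)).filter fun q =>
    q.Prime ∧ (yy δ x : ℝ) / (ξ * H) < (q : ℝ) ∧ (q : ℝ) ≤ (yy δ x : ℝ) / H

noncomputable def Hq (δ ξ x : ℝ) (q : ℕ) : ℝ :=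
  if h : ∃ H ∈ frakH δ ξ x, (yy δ x : ℝ) / (ξ * H) < (q : ℝ) ∧ (q : ℝ) ≤ (yy δ x : ℝ) / H
  then h.choose else 1

noncomputable def APset (M : ℝ) (K : ℕ) (b : ℤ) (H : ℝ) (q : ℕ) (n : ℤ) : Finset ℤ :=
  ((Finset.Icc 1 ⌊(K : ℝ) * H⌋₊).image fun h : ℕ => n + (q : ℤ) * (h : ℤ)).filter (inS (H ^ M) b)

noncomputable def lam (M zv : ℝ) (K : ℕ) (b : ℤ) (H : ℝ) (q : ℕ) (n : ℤ) : ℝ :=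
  if ∀ m ∈ APset M K b H q n, inSBetween (H ^ M) zv b m
  then sigBetween (H ^ M) zv ^ (-((APset M K b H q n).card : ℤ))
  else 0

noncomputable def APsetStar (M : ℝ) (K : ℕ) (N b : ℤ) (H : ℝ) (q : ℕ) (n : ℤ) : Finset ℤ :=
  ((Finset.Icc 1 ⌊(K : ℝ) * H⌋₊).image fun h : ℕ => n - (q : ℤ) * (h : ℤ)).filter (inS (H ^ M) (-N - b))

noncomputable def lamStar (M zv : ℝ) (K : ℕ) (N b : ℤ) (H : ℝ) (q : ℕ) (n : ℤ) : ℝ :=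
  if ∀ m ∈ APsetStar M K N b H q n, inSBetween (H ^ M) zv (-N - b) m
  then sigBetween (H ^ M) zv ^ (-((APsetStar M K N b H q n).card : ℤ))
  else 0

/-!
For `q ∈ QH` let `X q` be the sum of the weights `lam` over `(-Ky, y]`. Translating `n` by
`q h ≤ K y` bounds the contribution of `q` by `K H * X q`, and on the bad event Chebyshev's
inequality trades `X q` for a multiple of `(X q - (K + 1) y)²`, so everything rests on the second
moment of `X q` about `(K + 1) y`.

By the Chinese remainder theorem a uniform shift modulo `PP z` consists of independent uniform
shifts modulo `PP w`, where `w = H ^ M`, and modulo every prime in `(w, z]`. Given the former,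
`lam` is the indicator of an event for the latter divided by the naive probability of that event.
Its mean is a product of local factors `(1 - r / p) * (1 - 1 / p) ^ (-k) = 1 + O(k² / p²)`, hence
`1 + O(k² / w)`. For two progressions starting at `n₁` and `n₂` residues can collide modulo `p`
only if `p` divides `n₁ - n₂ + q l` for some `|l| ≤ k`, which costs a factor
`exp (k ∑_l ∑_{p ∣ n₁ - n₂ + q l} 1 / p)`. Convexity of `exp` isolates a single `l`, and
`exp (B ∑_{p ∣ m} 1 / p) ≤ ∏_{p ∣ m} (1 + A / p)` is averaged over an interval by expanding the
product into divisors. The rounding errors amount to `exp (O(H² ∑_{p ≤ z} 1 / p))`, which is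
negligible because `H ≤ y / (ξ z)` forces `H (log log x)² ≤ (log x) ^ (1 / 2)`, while
`∑_{p ≤ z} 1 / p = O(log log x)`.
-/

open Finset
open scoped BigOperators

section PrimeSets

theorem mem_primesUpTo {t : ℝ} {p : ℕ} : p ∈ primesUpTo t ↔ p.Prime ∧ (p : ℝ) ≤ t := by
  simp only [primesUpTo, mem_filter, mem_range, and_iff_right_iff_imp]
  exact fun h => Nat.lt_succ_of_le (Nat.le_floor h.2)

theorem mem_primesBetween {w t : ℝ} {p : ℕ} :
    p ∈ primesBetween w t ↔ p.Prime ∧ w < (p : ℝ) ∧ (p : ℝ) ≤ t := by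
  simp only [primesBetween, mem_filter, mem_range, and_iff_right_iff_imp]
  exact fun h => Nat.lt_succ_of_le (Nat.le_floor h.2.2)

theorem primesUpTo_mono {s t : ℝ} (h : s ≤ t) : primesUpTo s ⊆ primesUpTo t := fun _ hp =>
  mem_primesUpTo.2 ⟨(mem_primesUpTo.1 hp).1, (mem_primesUpTo.1 hp).2.trans h⟩

theorem primesBetween_subset_primesUpTo (w t : ℝ) : primesBetween w t ⊆ primesUpTo t :=
  fun _ hp => mem_primesUpTo.2 ⟨(mem_primesBetween.1 hp).1, (mem_primesBetween.1 hp).2.2⟩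

theorem primesUpTo_union_primesBetween {w t : ℝ} (h : w ≤ t) :
    primesUpTo w ∪ primesBetween w t = primesUpTo t := by
  refine Subset.antisymm
    (union_subset (primesUpTo_mono h) (primesBetween_subset_primesUpTo w t)) fun p hp => ?_
  obtain ⟨hprime, hpt⟩ := mem_primesUpTo.1 hp
  rw [mem_union, mem_primesUpTo, mem_primesBetween]
  exact (le_or_gt (p : ℝ) w).imp (⟨hprime, ·⟩) (⟨hprime, ·, hpt⟩)

theorem disjoint_primesUpTo_primesBetween (w t : ℝ) :
    Disjoint (primesUpTo w) (primesBetween w t) :=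
  disjoint_left.2 fun _ h₁ h₂ =>
    (mem_primesUpTo.1 h₁).2.not_gt (mem_primesBetween.1 h₂).2.1

theorem PP_mul_prod_primesBetween {w t : ℝ} (h : w ≤ t) :
    PP w * ∏ p ∈ primesBetween w t, p = PP t := by
  rw [PP, PP, ← prod_union (disjoint_primesUpTo_primesBetween w t),
    primesUpTo_union_primesBetween h]

theorem PP_ne_zero (t : ℝ) : PP t ≠ 0 :=
  prod_ne_zero_iff.2 fun _ hp => (mem_primesUpTo.1 hp).1.ne_zero

theorem coprime_PP_prod_primesBetween (w t : ℝ) :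
    (PP w).Coprime (∏ p ∈ primesBetween w t, p) := by
  refine Nat.Coprime.prod_left fun p hp => Nat.Coprime.prod_right fun r hr => ?_
  refine (Nat.coprime_primes (mem_primesUpTo.1 hp).1 (mem_primesBetween.1 hr).1).2 ?_
  rintro rfl
  exact disjoint_left.1 (disjoint_primesUpTo_primesBetween w t) hp hr

theorem pairwise_coprime_primesBetween (w t : ℝ) :
    (primesBetween w t : Set ℕ).Pairwise Nat.Coprime := fun _ hp _ hr hne =>
  (Nat.coprime_primes (mem_primesBetween.1 hp).1 (mem_primesBetween.1 hr).1).2 hne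

end PrimeSets

section PrimeSums

theorem sum_inv_sq_primesBetween_le {w : ℝ} (hw : 0 < w) (t : ℝ) :
    ∑ p ∈ primesBetween w t, 1 / (p : ℝ) ^ 2 ≤ 2 / w := by
  have hsub : primesBetween w t ⊆ Ioo ⌊w⌋₊ (⌊t⌋₊ + 1) := fun p hp => by
    obtain ⟨-, hwp, hpt⟩ := mem_primesBetween.1 hp
    exact mem_Ioo.2 ⟨(Nat.floor_lt hw.le).2 hwp, Nat.lt_succ_of_le (Nat.le_floor hpt)⟩
  calc ∑ p ∈ primesBetween w t, 1 / (p : ℝ) ^ 2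
      ≤ ∑ p ∈ Ioo ⌊w⌋₊ (⌊t⌋₊ + 1), 1 / (p : ℝ) ^ 2 :=
        sum_le_sum_of_subset_of_nonneg hsub fun _ _ _ => by positivity
    _ ≤ 2 / ((⌊w⌋₊ : ℝ) + 1) := by simpa only [one_div] using sum_Ioo_inv_sq_le ⌊w⌋₊ (⌊t⌋₊ + 1)
    _ ≤ 2 / w := by gcongr; exact (Nat.lt_floor_add_one w).le

theorem sum_log_primesBetween_le_theta (w t : ℝ) :
    ∑ p ∈ primesBetween w t, Real.log p ≤ Chebyshev.theta t := by
  refine sum_le_sum_of_subset_of_nonneg (fun p hp => ?_) fun p _ _ => Real.log_natCast_nonneg p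
  obtain ⟨hprime, -, hpt⟩ := mem_primesBetween.1 hp
  exact mem_filter.2 ⟨mem_Ioc.2 ⟨hprime.pos, Nat.le_floor hpt⟩, hprime⟩

theorem sum_inv_primesBetween_le_theta_div {w : ℝ} (hw : 1 < w) (t : ℝ) :
    ∑ p ∈ primesBetween w t, 1 / (p : ℝ) ≤ Chebyshev.theta t / (w * Real.log w) := by
  have hlogw : 0 < Real.log w := Real.log_pos hw
  calc ∑ p ∈ primesBetween w t, 1 / (p : ℝ)
      ≤ ∑ p ∈ primesBetween w t, Real.log p / (w * Real.log w) := by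
        refine sum_le_sum fun p hp => ?_
        obtain ⟨-, hwp, -⟩ := mem_primesBetween.1 hp
        have hlog : Real.log w ≤ Real.log p := Real.log_le_log (by linarith) hwp.le
        rw [div_le_div_iff₀ (by linarith) (by positivity), one_mul, mul_comm]
        gcongr
    _ ≤ Chebyshev.theta t / (w * Real.log w) := by
        rw [← sum_div]
        gcongr
        exact sum_log_primesBetween_le_theta w t

theorem sum_inv_primesBetween_two_pow_le {n : ℕ} (hn : n ≠ 0) :
    ∑ p ∈ primesBetween (2 ^ n) (2 ^ (n + 1)), 1 / (p : ℝ) ≤ 4 / n := by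
  have : 0 < Real.log 2 := Real.log_pos one_lt_two
  calc ∑ p ∈ primesBetween (2 ^ n) (2 ^ (n + 1)), 1 / (p : ℝ)
      ≤ Chebyshev.theta (2 ^ (n + 1)) / (2 ^ n * Real.log (2 ^ n)) :=
        sum_inv_primesBetween_le_theta_div (one_lt_pow₀ one_lt_two hn) _
    _ ≤ Real.log 4 * 2 ^ (n + 1) / (2 ^ n * Real.log (2 ^ n)) := by
        rw [Real.log_pow]
        gcongr
        exact Chebyshev.theta_le_log4_mul_x (by positivity)
    _ = 4 / n := by
        rw [show (4 : ℝ) = 2 ^ 2 by norm_num, Real.log_pow, Real.log_pow, pow_succ]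
        push_cast
        field_simp

theorem sum_inv_primesUpTo_two_pow_le (n : ℕ) :
    ∑ p ∈ primesUpTo (2 ^ n), 1 / (p : ℝ) ≤ 8 * (harmonic n : ℝ) := by
  induction n with
  | zero =>
    have hempty : primesUpTo (2 ^ 0) = ∅ := eq_empty_of_forall_notMem fun p hp => by
      obtain ⟨hprime, hp1⟩ := mem_primesUpTo.1 hp
      exact hprime.one_lt.not_ge (by exact_mod_cast hp1)
    rw [hempty]
    simp
  | succ n ih =>
    rw [harmonic_succ, ← primesUpTo_union_primesBetween (w := 2 ^ n)
      (pow_le_pow_right₀ one_le_two n.le_succ),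
      sum_union (disjoint_primesUpTo_primesBetween _ _)]
    push_cast
    rw [mul_add]
    refine add_le_add ih ?_
    rcases eq_or_ne n 0 with rfl | hn
    · have hsub : primesBetween (2 ^ 0) (2 ^ (0 + 1)) ⊆ {2} := fun p hp => by
        obtain ⟨hprime, -, hp2⟩ := mem_primesBetween.1 hp
        exact mem_singleton.2 (le_antisymm (by exact_mod_cast hp2) hprime.two_le)
      refine (sum_le_sum_of_subset_of_nonneg hsub fun _ _ _ => by positivity).trans ?_
      norm_num
    · refine (sum_inv_primesBetween_two_pow_le hn).trans ?_
      have hn1 : (1 : ℝ) ≤ n := by exact_mod_cast Nat.one_le_iff_ne_zero.2 hn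
      rw [← div_eq_mul_inv, div_le_div_iff₀ (by linarith) (by linarith)]
      linarith

theorem sum_inv_primesUpTo_le {z L : ℝ} (hL : 1 ≤ L) (hz : z ≤ Real.exp L) :
    ∑ p ∈ primesUpTo z, 1 / (p : ℝ) ≤ 8 * (1 + Real.log (3 * L)) := by
  set n : ℕ := ⌈2 * L⌉₊
  have hn_le : (n : ℝ) ≤ 3 * L := by linarith [Nat.ceil_lt_add_one (a := 2 * L) (by linarith)]
  have hle_n : 2 * L ≤ n := Nat.le_ceil _
  have hzn : z ≤ 2 ^ n := by
    refine hz.trans ((Real.le_log_iff_exp_le (by positivity)).1 ?_)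
    rw [Real.log_pow]
    nlinarith [Real.log_two_gt_d9]
  calc ∑ p ∈ primesUpTo z, 1 / (p : ℝ)
      ≤ ∑ p ∈ primesUpTo (2 ^ n), 1 / (p : ℝ) :=
        sum_le_sum_of_subset_of_nonneg (primesUpTo_mono hzn) fun _ _ _ => by positivity
    _ ≤ 8 * (harmonic n : ℝ) := sum_inv_primesUpTo_two_pow_le n
    _ ≤ 8 * (1 + Real.log n) := by gcongr; exact harmonic_le_one_add_log n
    _ ≤ 8 * (1 + Real.log (3 * L)) := by
        have : (0 : ℝ) < n := by linarith
        gcongr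

end PrimeSums

section Averages

theorem expect_range_mul_of_coprime {E : Type*} [AddCommMonoid E] [Module ℚ≥0 E] {m n : ℕ}
    (h : m.Coprime n) (F : ℕ → ℕ → E)
    (hF : ∀ a a' c c', a ≡ a' [MOD m] → c ≡ c' [MOD n] → F a c = F a' c') :
    𝔼 b ∈ range (m * n), F b b = 𝔼 a ∈ range m, 𝔼 c ∈ range n, F a c := by
  rcases eq_or_ne m 0 with rfl | hm
  · simp
  rcases eq_or_ne n 0 with rfl | hn
  · simp
  rw [← expect_product']
  refine expect_nbij' (fun b => (b % m, b % n)) (fun x => (Nat.chineseRemainder h x.1 x.2 : ℕ))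
    (fun b _ => mem_product.2 ⟨mem_range.2 (Nat.mod_lt _ hm.bot_lt),
      mem_range.2 (Nat.mod_lt _ hn.bot_lt)⟩)
    (fun x _ => mem_range.2 (Nat.chineseRemainder_lt_mul h _ _ hm hn)) ?_ ?_
    (fun b _ => hF _ _ _ _ (Nat.mod_modEq b m).symm (Nat.mod_modEq b n).symm)
  · intro b hb
    refine (Nat.ModEq.eq_of_lt_of_lt ?_ (mem_range.1 hb)
      (Nat.chineseRemainder_lt_mul h _ _ hm hn)).symm
    exact Nat.chineseRemainder_modEq_unique h (Nat.mod_modEq b m).symm (Nat.mod_modEq b n).symm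
  · rintro ⟨a, c⟩ hac
    obtain ⟨ha, hc⟩ := mem_product.1 hac
    obtain ⟨hr₁, hr₂⟩ := (Nat.chineseRemainder h a c).2
    exact Prod.ext (Eq.trans hr₁ (Nat.mod_eq_of_lt (mem_range.1 ha)))
      (Eq.trans hr₂ (Nat.mod_eq_of_lt (mem_range.1 hc)))

theorem expect_range_prod_of_pairwise_coprime {ι R : Type*} [CommSemiring R] [Module ℚ≥0 R]
    [IsScalarTower ℚ≥0 R R] [SMulCommClass ℚ≥0 R R] {T : Finset ι} {m : ι → ℕ}
    (hm : (T : Set ι).Pairwise (Function.onFun Nat.Coprime m)) {f : ι → ℕ → R}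
    (hf : ∀ i ∈ T, ∀ a a', a ≡ a' [MOD m i] → f i a = f i a') :
    𝔼 b ∈ range (∏ i ∈ T, m i), ∏ i ∈ T, f i b = ∏ i ∈ T, 𝔼 a ∈ range (m i), f i a := by
  induction T using Finset.induction_on with
  | empty => simp
  | insert r T hr ih =>
    rw [coe_insert, Set.pairwise_insert] at hm
    have hcop : (m r).Coprime (∏ i ∈ T, m i) :=
      Nat.Coprime.prod_right fun i hi => (hm.2 i hi (ne_of_mem_of_not_mem hi hr).symm).1
    simp only [prod_insert hr]
    rw [← ih hm.1 fun i hi => hf i (mem_insert_of_mem hi), expect_mul_expect]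
    refine expect_range_mul_of_coprime hcop (fun a c => f r a * ∏ i ∈ T, f i c)
      fun a a' c c' ha hc => ?_
    rw [hf r (mem_insert_self r T) a a' ha]
    congr 1
    exact prod_congr rfl fun i hi => hf i (mem_insert_of_mem hi) c c'
      (hc.of_dvd (dvd_prod_of_mem m hi))

theorem exp_sum_le_expect {ι : Type*} {s : Finset ι} (hs : s.Nonempty) (f : ι → ℝ) :
    Real.exp (∑ i ∈ s, f i) ≤ 𝔼 i ∈ s, Real.exp (s.card * f i) := by
  have hc : (0 : ℝ) < s.card := by exact_mod_cast hs.card_pos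
  have h := convexOn_exp.map_sum_le (t := s) (w := fun _ => 1 / (s.card : ℝ))
    (p := fun i => (s.card : ℝ) * f i) (fun _ _ => by positivity)
    (by rw [sum_const, nsmul_eq_mul]; field_simp) (fun _ _ => Set.mem_univ _)
  simp only [smul_eq_mul, ← mul_sum] at h
  rw [expect_eq_sum_div_card, div_eq_inv_mul, inv_eq_one_div]
  exact le_of_eq_of_le (by rw [← mul_assoc, one_div_mul_cancel hc.ne', one_mul]) h

theorem one_sub_sum_le_prod_one_sub {ι : Type*} {s : Finset ι} {f : ι → ℝ}
    (h0 : ∀ i ∈ s, 0 ≤ f i) (h1 : ∀ i ∈ s, f i ≤ 1) :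
    1 - ∑ i ∈ s, f i ≤ ∏ i ∈ s, (1 - f i) := by
  induction s using Finset.induction_on with
  | empty => simp
  | insert a s ha ih =>
    rw [sum_insert ha, prod_insert ha]
    have hs := ih (fun i hi => h0 i (mem_insert_of_mem hi)) fun i hi => h1 i (mem_insert_of_mem hi)
    have hsum := sum_nonneg fun i hi => h0 i (mem_insert_of_mem hi)
    nlinarith [h0 a (mem_insert_self a s), h1 a (mem_insert_self a s)]

theorem exp_le_one_add_mul_exp (t : ℝ) : Real.exp t ≤ 1 + t * Real.exp t := by
  have h := mul_le_mul_of_nonneg_right (Real.one_sub_le_exp_neg t) (Real.exp_pos t).le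
  rw [← Real.exp_add, neg_add_cancel, Real.exp_zero] at h
  linarith

end Averages

section SurvivalWeights

theorem natCast_dvd_sub_iff_of_modEq {p a a' : ℕ} (h : a ≡ a' [MOD p]) (m : ℤ) :
    (p : ℤ) ∣ m - a ↔ (p : ℤ) ∣ m - a' :=
  dvd_iff_dvd_of_dvd_sub (by simpa using Nat.modEq_iff_dvd.1 h)

theorem inS_iff_of_modEq {t : ℝ} {a a' : ℕ} (h : a ≡ a' [MOD PP t]) (n : ℤ) :
    inS t a n ↔ inS t a' n :=
  forall₃_congr fun _ hp hpt => not_congr <| natCast_dvd_sub_iff_of_modEq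
    (h.of_dvd (dvd_prod_of_mem _ (mem_primesUpTo.2 ⟨hp, hpt⟩))) n

theorem inSBetween_iff_of_modEq {w t : ℝ} {a a' : ℕ}
    (h : a ≡ a' [MOD ∏ p ∈ primesBetween w t, p]) (n : ℤ) :
    inSBetween w t a n ↔ inSBetween w t a' n :=
  forall₄_congr fun _ hp hwp hpt => not_congr <| natCast_dvd_sub_iff_of_modEq
    (h.of_dvd (dvd_prod_of_mem _ (mem_primesBetween.2 ⟨hp, hwp, hpt⟩))) n

/-- The set of residue classes modulo `p` that are occupied by a finite set of integers. -/
def residues (p : ℕ) (A : Finset ℤ) : Finset (ZMod p) := A.image Int.cast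

theorem card_residues_le_card (p : ℕ) (A : Finset ℤ) : (residues p A).card ≤ A.card :=
  card_image_le

theorem card_residues_le (p : ℕ) [NeZero p] (A : Finset ℤ) : (residues p A).card ≤ p :=
  (card_le_univ _).trans_eq (ZMod.card p)

theorem expect_forall_not_dvd_sub (p : ℕ) [NeZero p] (A : Finset ℤ) :
    𝔼 a ∈ range p, (if ∀ m ∈ A, ¬ (p : ℤ) ∣ m - (a : ℤ) then (1 : ℝ) else 0) =
      1 - ((residues p A).card : ℝ) / p := by
  have hp : (p : ℝ) ≠ 0 := by exact_mod_cast NeZero.ne p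
  have hsum : ∑ a ∈ range p, (if ∀ m ∈ A, ¬ (p : ℤ) ∣ m - (a : ℤ) then (1 : ℝ) else 0) =
      ∑ a : ZMod p, if a ∈ (residues p A)ᶜ then (1 : ℝ) else 0 := by
    refine sum_nbij' (fun a => (a : ZMod p)) ZMod.val (fun _ _ => mem_univ _)
      (fun a _ => mem_range.2 (ZMod.val_lt a)) (fun a ha => ZMod.val_cast_of_lt (mem_range.1 ha))
      (fun a _ => ZMod.natCast_zmod_val a) fun a _ => if_congr ?_ rfl rfl
    simp only [residues, mem_compl, mem_image, not_exists, not_and]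
    refine forall₂_congr fun m _ => not_congr ?_
    rw [← ZMod.intCast_zmod_eq_zero_iff_dvd, Int.cast_sub, Int.cast_natCast, sub_eq_zero]
  rw [expect_eq_sum_div_card, hsum, card_range, sum_ite_mem, univ_inter, sum_const, card_compl,
    ZMod.card, nsmul_one, Nat.cast_sub (card_residues_le p A), sub_div, div_self hp]

theorem forall_inSBetween_iff {w z : ℝ} {A : Finset ℤ} {c : ℤ} :
    (∀ m ∈ A, inSBetween w z c m) ↔
      ∀ p ∈ primesBetween w z, ∀ m ∈ A, ¬ (p : ℤ) ∣ m - c :=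
  ⟨fun h _ hp m hm => have ⟨hprime, hwp, hpz⟩ := mem_primesBetween.1 hp
    h m hm _ hprime hwp hpz,
   fun h m hm _ hprime hwp hpz => h _ (mem_primesBetween.2 ⟨hprime, hwp, hpz⟩) m hm⟩

theorem expect_forall_inSBetween (w z : ℝ) (A : Finset ℤ) :
    𝔼 c ∈ range (∏ p ∈ primesBetween w z, p),
        (if ∀ m ∈ A, inSBetween w z c m then (1 : ℝ) else 0) =
      ∏ p ∈ primesBetween w z, (1 - ((residues p A).card : ℝ) / p) := by
  simp_rw [forall_inSBetween_iff, ← prod_boole (s := primesBetween w z)]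
  rw [expect_range_prod_of_pairwise_coprime (pairwise_coprime_primesBetween w z)
    (f := fun p a => if ∀ m ∈ A, ¬ (p : ℤ) ∣ m - (a : ℤ) then (1 : ℝ) else 0)
    fun p _ a a' h => by simp only [natCast_dvd_sub_iff_of_modEq h]]
  refine prod_congr rfl fun p hp => ?_
  have : NeZero p := ⟨(mem_primesBetween.1 hp).1.ne_zero⟩
  exact expect_forall_not_dvd_sub p A

theorem one_sub_one_div_pos {p : ℝ} (hp : 1 < p) : 0 < 1 - 1 / p :=
  sub_pos.2 ((div_lt_one (one_pos.trans hp)).2 hp)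

theorem sigBetween_pos (w z : ℝ) : 0 < sigBetween w z :=
  prod_pos fun _ hp =>
    one_sub_one_div_pos (by exact_mod_cast (mem_primesBetween.1 hp).1.one_lt)

theorem expect_ite_forall_inSBetween_zpow (w z : ℝ) (A : Finset ℤ) (k : ℕ) :
    𝔼 c ∈ range (∏ p ∈ primesBetween w z, p),
        (if ∀ m ∈ A, inSBetween w z c m then sigBetween w z ^ (-(k : ℤ)) else 0) =
      ∏ p ∈ primesBetween w z,
        (1 - ((residues p A).card : ℝ) / p) * ((1 - 1 / (p : ℝ)) ^ k)⁻¹ := by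
  have h := expect_forall_inSBetween w z A
  rw [prod_mul_distrib, ← h, expect_mul, prod_inv_distrib, prod_pow]
  simp only [ite_mul, one_mul, zero_mul, zpow_neg, zpow_natCast, sigBetween]

/-- The indicator that every element of `A` survives the sieve by the primes in `(w, z]` with shift
`c`, divided by `sigBetween w z ^ A.card`, the probability of this event if the elements of `A`
survived independently. -/
noncomputable def survivalWeight (w z : ℝ) (A : Finset ℤ) (c : ℤ) : ℝ :=
  if ∀ m ∈ A, inSBetween w z c m then sigBetween w z ^ (-(A.card : ℤ)) else 0

theorem survivalWeight_nonneg (w z : ℝ) (A : Finset ℤ) (c : ℤ) : 0 ≤ survivalWeight w z A c := by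
  unfold survivalWeight
  split_ifs
  · exact zpow_nonneg (sigBetween_pos w z).le _
  · exact le_rfl

theorem survivalWeight_congr {w z : ℝ} {c c' : ℕ}
    (h : c ≡ c' [MOD ∏ p ∈ primesBetween w z, p]) (A : Finset ℤ) :
    survivalWeight w z A c = survivalWeight w z A c' := by
  simp only [survivalWeight, inSBetween_iff_of_modEq h]

theorem survivalWeight_mul_survivalWeight (w z : ℝ) (A₁ A₂ : Finset ℤ) (c : ℤ) :
    survivalWeight w z A₁ c * survivalWeight w z A₂ c =
      if ∀ m ∈ A₁ ∪ A₂, inSBetween w z c m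
      then sigBetween w z ^ (-((A₁.card + A₂.card : ℕ) : ℤ)) else 0 := by
  rw [Nat.cast_add, neg_add, zpow_add₀ (sigBetween_pos w z).ne']
  simp only [survivalWeight, forall_mem_union, ite_and]
  split_ifs <;> simp only [mul_zero, zero_mul]

theorem one_sub_sq_div_sq_le_local_factor {p : ℝ} (hp : 2 ≤ p) {k : ℕ} (hk : (k : ℝ) ≤ p) {r : ℝ}
    (hr : r ≤ k) : 1 - (k : ℝ) ^ 2 * (1 / p ^ 2) ≤ (1 - r / p) * ((1 - 1 / p) ^ k)⁻¹ := by
  have hp0 : 0 < p := by linarith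
  have hpos : 0 < 1 - 1 / p := one_sub_one_div_pos (by linarith)
  have hinv : 1 + k / p ≤ ((1 - 1 / p) ^ k)⁻¹ := by
    rw [le_inv_comm₀ (by positivity) (by positivity)]
    calc (1 - 1 / p) ^ k ≤ Real.exp (-(1 / p)) ^ k := by
          gcongr
          exact Real.one_sub_le_exp_neg _
      _ = (Real.exp (k / p))⁻¹ := by
          rw [← Real.exp_nat_mul, ← Real.exp_neg]
          ring_nf
      _ ≤ (1 + k / p)⁻¹ := by
          gcongr
          linarith [Real.add_one_le_exp ((k : ℝ) / p)]
  have hkp : k / p ≤ 1 := (div_le_one hp0).2 hk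
  have hrk : r / p ≤ k / p := by gcongr
  calc 1 - (k : ℝ) ^ 2 * (1 / p ^ 2) = (1 - k / p) * (1 + k / p) := by ring
    _ ≤ (1 - r / p) * ((1 - 1 / p) ^ k)⁻¹ :=
        mul_le_mul (by linarith) hinv (by positivity) (by linarith)

theorem inv_one_sub_inv_le_exp {p : ℝ} (hp : 2 ≤ p) :
    (1 - 1 / p)⁻¹ ≤ Real.exp (1 / p + 2 * (1 / p ^ 2)) := by
  have : 0 < p := by linarith
  have hpos : 0 < 1 - 1 / p := one_sub_one_div_pos (by linarith)
  refine le_trans ?_ (Real.add_one_le_exp _)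
  rw [inv_le_iff_one_le_mul₀ hpos]
  have hprod : (1 / p + 2 * (1 / p ^ 2) + 1) * (1 - 1 / p) = 1 + (p - 2) / p ^ 3 := by
    field_simp
    ring
  rw [hprod, le_add_iff_nonneg_right]
  exact div_nonneg (by linarith) (by positivity)

theorem local_factor_le_exp {p : ℝ} (hp : 2 ≤ p) {k : ℕ} {r e : ℝ} (hk : (k : ℝ) ≤ r + e) :
    (1 - r / p) * ((1 - 1 / p) ^ k)⁻¹ ≤ Real.exp (2 * k * (1 / p ^ 2) + e / p) := by
  have : 0 < p := by linarith
  have hpos : 0 < 1 - 1 / p := one_sub_one_div_pos (by linarith)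
  calc (1 - r / p) * ((1 - 1 / p) ^ k)⁻¹
      ≤ Real.exp (-(r / p)) * Real.exp (1 / p + 2 * (1 / p ^ 2)) ^ k := by
        rw [← inv_pow]
        refine mul_le_mul (Real.one_sub_le_exp_neg _) ?_ (by positivity) (by positivity)
        gcongr
        exact inv_one_sub_inv_le_exp hp
    _ = Real.exp (2 * k * (1 / p ^ 2) + (k - r) / p) := by
        rw [← Real.exp_nat_mul, ← Real.exp_add]
        ring_nf
    _ ≤ Real.exp (2 * k * (1 / p ^ 2) + e / p) := by
        gcongr
        linarith

theorem one_sub_le_expect_survivalWeight {w : ℝ} (hw : 0 < w) (z : ℝ) {A : Finset ℤ}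
    (hA : (A.card : ℝ) ≤ w) :
    1 - 2 * (A.card : ℝ) ^ 2 / w ≤
      𝔼 c ∈ range (∏ p ∈ primesBetween w z, p), survivalWeight w z A c := by
  simp only [survivalWeight]
  rw [expect_ite_forall_inSBetween_zpow]
  have hp : ∀ p ∈ primesBetween w z, (2 : ℝ) ≤ p ∧ (A.card : ℝ) ≤ p := fun p hp =>
    ⟨by exact_mod_cast (mem_primesBetween.1 hp).1.two_le,
      hA.trans (mem_primesBetween.1 hp).2.1.le⟩
  have hle : ∀ p ∈ primesBetween w z, (A.card : ℝ) ^ 2 * (1 / (p : ℝ) ^ 2) ≤ 1 := fun p h => by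
    have ⟨h2, h3⟩ := hp p h
    rw [mul_one_div, div_le_one (by positivity)]
    gcongr
  calc 1 - 2 * (A.card : ℝ) ^ 2 / w = 1 - (A.card : ℝ) ^ 2 * (2 / w) := by ring
    _ ≤ 1 - ∑ p ∈ primesBetween w z, (A.card : ℝ) ^ 2 * (1 / (p : ℝ) ^ 2) := by
        rw [← mul_sum]
        gcongr
        exact sum_inv_sq_primesBetween_le hw z
    _ ≤ ∏ p ∈ primesBetween w z, (1 - (A.card : ℝ) ^ 2 * (1 / (p : ℝ) ^ 2)) :=
        one_sub_sum_le_prod_one_sub (fun _ _ => by positivity) hle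
    _ ≤ ∏ p ∈ primesBetween w z,
          (1 - ((residues p A).card : ℝ) / p) * ((1 - 1 / (p : ℝ)) ^ A.card)⁻¹ :=
        prod_le_prod (fun p h => sub_nonneg.2 (hle p h)) fun p h =>
          one_sub_sq_div_sq_le_local_factor (hp p h).1 (hp p h).2
            (by exact_mod_cast card_residues_le_card p A)

theorem expect_survivalWeight_mul_le {w : ℝ} (hw : 0 < w) {z : ℝ} {A₁ A₂ : Finset ℤ} {e : ℕ → ℝ}
    (he : ∀ p ∈ primesBetween w z,
      ((A₁.card + A₂.card : ℕ) : ℝ) ≤ ((residues p (A₁ ∪ A₂)).card : ℝ) + e p) :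
    𝔼 c ∈ range (∏ p ∈ primesBetween w z, p),
        survivalWeight w z A₁ c * survivalWeight w z A₂ c ≤
      Real.exp (4 * (A₁.card + A₂.card : ℕ) / w + ∑ p ∈ primesBetween w z, e p / p) := by
  simp only [survivalWeight_mul_survivalWeight]
  rw [expect_ite_forall_inSBetween_zpow]
  set k := A₁.card + A₂.card
  calc _ ≤ ∏ p ∈ primesBetween w z, Real.exp (2 * k * (1 / (p : ℝ) ^ 2) + e p / p) := by
        refine prod_le_prod (fun p hp => ?_) fun p hp => ?_
        · have hprime := (mem_primesBetween.1 hp).1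
          have : NeZero p := ⟨hprime.ne_zero⟩
          have hres : ((residues p (A₁ ∪ A₂)).card : ℝ) / p ≤ 1 :=
            div_le_one_of_le₀ (by exact_mod_cast card_residues_le p _) p.cast_nonneg
          have := one_sub_one_div_pos (p := p) (by exact_mod_cast hprime.one_lt)
          exact mul_nonneg (sub_nonneg.2 hres) (by positivity)
        · exact local_factor_le_exp (by exact_mod_cast (mem_primesBetween.1 hp).1.two_le) (he p hp)
    _ = Real.exp (2 * k * ∑ p ∈ primesBetween w z, 1 / (p : ℝ) ^ 2 +
          ∑ p ∈ primesBetween w z, e p / p) := by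
        rw [← Real.exp_sum, sum_add_distrib, mul_sum]
    _ ≤ Real.exp (2 * k * (2 / w) + ∑ p ∈ primesBetween w z, e p / p) := by
        gcongr
        exact sum_inv_sq_primesBetween_le hw z
    _ = Real.exp (4 * k / w + ∑ p ∈ primesBetween w z, e p / p) := by
        congr 2
        ring

end SurvivalWeights

section Progressions

/-- The arithmetic progression `n + q, n + 2q, …, n + kq`. -/
def progression (q k : ℕ) (n : ℤ) : Finset ℤ := (Icc 1 k).image fun h : ℕ => n + (q : ℤ) * (h : ℤ)

theorem card_progression_le (q k : ℕ) (n : ℤ) : (progression q k n).card ≤ k :=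
  card_image_le.trans_eq (by simp)

theorem card_residues_of_subset_progression {p q k : ℕ} (hp : p.Prime) (hpq : ¬ p ∣ q)
    (hkp : k ≤ p) {n : ℤ} {A : Finset ℤ} (hA : A ⊆ progression q k n) :
    (residues p A).card = A.card := by
  refine card_image_of_injOn fun m hm m' hm' hmm => ?_
  obtain ⟨i, hi, rfl⟩ := mem_image.1 (hA hm)
  obtain ⟨j, hj, rfl⟩ := mem_image.1 (hA hm')
  rw [mem_Icc] at hi hj
  have hmul : (p : ℤ) ∣ q * ((i : ℤ) - j) := by
    rwa [ZMod.intCast_eq_intCast_iff_dvd_sub, dvd_sub_comm, add_sub_add_left_eq_sub,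
      ← mul_sub] at hmm
  have hdvd : (p : ℤ) ∣ (i : ℤ) - j :=
    ((Nat.prime_iff_prime_int.1 hp).dvd_or_dvd hmul).resolve_left
      (mt Int.natCast_dvd_natCast.1 hpq)
  have hij : (i : ℤ) - j = 0 := Int.eq_zero_of_abs_lt_dvd hdvd (by rw [abs_lt]; omega)
  rw [sub_eq_zero.1 hij]

theorem card_add_card_le_card_residues_union {p q k : ℕ} (hp : p.Prime) (hpq : ¬ p ∣ q)
    (hkp : k ≤ p) {n₁ n₂ : ℤ} {A₁ A₂ : Finset ℤ} (hA₁ : A₁ ⊆ progression q k n₁)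
    (hA₂ : A₂ ⊆ progression q k n₂) :
    A₁.card + A₂.card ≤ (residues p (A₁ ∪ A₂)).card +
      k * ((Icc (-(k : ℤ)) k).filter fun l => (p : ℤ) ∣ n₁ - n₂ + q * l).card := by
  have hcard₁ := card_residues_of_subset_progression hp hpq hkp hA₁
  have hcard₂ := card_residues_of_subset_progression hp hpq hkp hA₂
  have hunion : residues p (A₁ ∪ A₂) = residues p A₁ ∪ residues p A₂ := image_union _ _
  have hinter := card_union_add_card_inter (residues p A₁) (residues p A₂)
  rw [hunion, ← hcard₁, ← hcard₂, ← hinter]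
  refine Nat.add_le_add_left ?_ _
  rcases (residues p A₁ ∩ residues p A₂).eq_empty_or_nonempty with hempty | ⟨a, ha⟩
  · simp [hempty]
  obtain ⟨ha₁, ha₂⟩ := mem_inter.1 ha
  obtain ⟨m, hm, rfl⟩ := mem_image.1 ha₁
  obtain ⟨m', hm', hmm⟩ := mem_image.1 ha₂
  obtain ⟨i, hi, rfl⟩ := mem_image.1 (hA₁ hm)
  obtain ⟨j, hj, rfl⟩ := mem_image.1 (hA₂ hm')
  rw [mem_Icc] at hi hj
  have hdvd : (p : ℤ) ∣ n₁ - n₂ + q * ((i : ℤ) - j) := by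
    rw [ZMod.intCast_eq_intCast_iff_dvd_sub] at hmm
    convert hmm using 1
    ring
  have hpos : 0 < ((Icc (-(k : ℤ)) k).filter fun l => (p : ℤ) ∣ n₁ - n₂ + q * l).card :=
    card_pos.2 ⟨i - j, mem_filter.2 ⟨mem_Icc.2 (by omega), hdvd⟩⟩
  calc (residues p A₁ ∩ residues p A₂).card ≤ (residues p A₂).card :=
        card_le_card inter_subset_right
    _ ≤ k := hcard₂.trans_le ((card_le_card hA₂).trans (card_progression_le q k n₂))
    _ ≤ _ := Nat.le_mul_of_pos_right k hpos

/-- The sum of `1 / p` over the prime divisors `p` of `m` in `(w, z]`. -/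
noncomputable def sumInvPrimeDivisors (w z : ℝ) (m : ℤ) : ℝ :=
  ∑ p ∈ (primesBetween w z).filter fun p : ℕ => (p : ℤ) ∣ m, 1 / (p : ℝ)

/-- The weight `lam` with its shift decoupled: `a` governs the small primes `p ≤ w` and `c` the
primes in `(w, z]`. -/
noncomputable def decoupledWeight (w z : ℝ) (q k : ℕ) (a c n : ℤ) : ℝ :=
  survivalWeight w z ((progression q k n).filter (inS w a)) c

theorem lam_eq_decoupledWeight (M z : ℝ) (K : ℕ) (b : ℤ) (H : ℝ) (q : ℕ) (n : ℤ) :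
    lam M z K b H q n = decoupledWeight (H ^ M) z q ⌊(K : ℝ) * H⌋₊ b b n := rfl

theorem lam_nonneg (M z : ℝ) (K : ℕ) (b : ℤ) (H : ℝ) (q : ℕ) (n : ℤ) :
    0 ≤ lam M z K b H q n :=
  survivalWeight_nonneg _ _ _ _

theorem decoupledWeight_congr {w z : ℝ} {a a' c c' : ℕ} (ha : a ≡ a' [MOD PP w])
    (hc : c ≡ c' [MOD ∏ p ∈ primesBetween w z, p]) (q k : ℕ) (n : ℤ) :
    decoupledWeight w z q k a c n = decoupledWeight w z q k a' c' n := by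
  simp only [decoupledWeight, inS_iff_of_modEq ha, survivalWeight_congr hc]

theorem expect_range_PP_eq {w z : ℝ} (hwz : w ≤ z) (F : ℕ → ℕ → ℝ)
    (hF : ∀ a a' c c', a ≡ a' [MOD PP w] → c ≡ c' [MOD ∏ p ∈ primesBetween w z, p] →
      F a c = F a' c') :
    𝔼 b ∈ range (PP z), F b b =
      𝔼 a ∈ range (PP w), 𝔼 c ∈ range (∏ p ∈ primesBetween w z, p), F a c := by
  rw [← PP_mul_prod_primesBetween hwz]
  exact expect_range_mul_of_coprime (coprime_PP_prod_primesBetween w z) F hF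

theorem range_PP_nonempty (t : ℝ) : (range (PP t)).Nonempty :=
  nonempty_range_iff.2 (PP_ne_zero t)

theorem one_sub_le_expect_decoupledWeight {w z : ℝ} (hw : 0 < w) (hwz : w ≤ z) {k : ℕ}
    (hk : (k : ℝ) ≤ w) (q : ℕ) (n : ℤ) :
    1 - 2 * (k : ℝ) ^ 2 / w ≤ 𝔼 b ∈ range (PP z), decoupledWeight w z q k b b n := by
  rw [expect_range_PP_eq hwz (fun a c => decoupledWeight w z q k a c n)
    fun a a' c c' ha hc => decoupledWeight_congr ha hc q k n]
  refine le_expect (range_PP_nonempty w) fun a _ => ?_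
  set A := (progression q k n).filter (inS w a)
  have hcard : (A.card : ℝ) ≤ k :=
    by exact_mod_cast (card_filter_le _ _).trans (card_progression_le q k n)
  calc 1 - 2 * (k : ℝ) ^ 2 / w ≤ 1 - 2 * (A.card : ℝ) ^ 2 / w := by gcongr
    _ ≤ _ := one_sub_le_expect_survivalWeight hw z (hcard.trans hk)

theorem sum_card_filter_dvd_div (w z : ℝ) (L : Finset ℤ) (f : ℤ → ℤ) :
    ∑ p ∈ primesBetween w z, ((L.filter fun l => (p : ℤ) ∣ f l).card : ℝ) / p =
      ∑ l ∈ L, sumInvPrimeDivisors w z (f l) := by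
  simp only [sumInvPrimeDivisors, sum_filter]
  rw [sum_comm]
  refine sum_congr rfl fun p _ => ?_
  rw [← sum_filter, sum_const, nsmul_eq_mul, mul_one_div]

theorem expect_decoupledWeight_mul_le {w z : ℝ} (hw : 0 < w) (hwz : w ≤ z) {q k : ℕ}
    (hk : (k : ℝ) ≤ w) (hq : ∀ p ∈ primesBetween w z, ¬ p ∣ q) (n₁ n₂ : ℤ) :
    𝔼 b ∈ range (PP z), decoupledWeight w z q k b b n₁ * decoupledWeight w z q k b b n₂ ≤
      Real.exp (8 * k / w + k * ∑ l ∈ Icc (-(k : ℤ)) k,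
        sumInvPrimeDivisors w z (n₁ - n₂ + q * l)) := by
  rw [expect_range_PP_eq hwz
    (fun a c => decoupledWeight w z q k a c n₁ * decoupledWeight w z q k a c n₂)
    fun a a' c c' ha hc => by
      rw [decoupledWeight_congr ha hc q k n₁, decoupledWeight_congr ha hc q k n₂]]
  refine expect_le (range_PP_nonempty w) fun a _ => ?_
  set A : ℤ → Finset ℤ := fun n => (progression q k n).filter (inS w a)
  have hcard : ∀ n, (A n).card ≤ k := fun n =>
    (card_filter_le _ _).trans (card_progression_le q k n)
  refine (expect_survivalWeight_mul_le (A₁ := A n₁) (A₂ := A n₂) hw (z := z) (e := fun p =>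
    k * ((Icc (-(k : ℤ)) k).filter fun l => (p : ℤ) ∣ n₁ - n₂ + q * l).card) fun p hp => ?_).trans
    (Real.exp_le_exp.2 (add_le_add ?_ (le_of_eq ?_)))
  · obtain ⟨hprime, hwp, -⟩ := mem_primesBetween.1 hp
    exact_mod_cast card_add_card_le_card_residues_union hprime (hq p hp)
      (by exact_mod_cast hk.trans hwp.le) (filter_subset _ _) (filter_subset _ _)
  · have hadd : (((A n₁).card + (A n₂).card : ℕ) : ℝ) ≤ 2 * k := by
      exact_mod_cast (add_le_add (hcard n₁) (hcard n₂)).trans_eq (two_mul k).symm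
    rw [div_le_div_iff_of_pos_right hw]
    linarith
  · rw [← sum_card_filter_dvd_div, mul_sum]
    exact sum_congr rfl fun p _ => mul_div_assoc _ _ _

end Progressions

section IntervalSums

theorem card_filter_dvd_sub_le {d : ℕ} (hd : d ≠ 0) (u v c : ℤ) :
    (((Ioc u v).filter fun n => (d : ℤ) ∣ n - c).card : ℝ) ≤ ((Ioc u v).card : ℝ) / d + 1 := by
  rcases le_total v u with hvu | huv
  · simp [Ioc_eq_empty_of_le hvu]
  have hcount : (((Ioc u v).filter fun n => (d : ℤ) ∣ n - c).card : ℚ) =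
      max ((⌊((v : ℚ) - c) / d⌋ - ⌊((u : ℚ) - c) / d⌋ : ℤ) : ℚ) 0 := by
    have h := Int.Ioc_filter_modEq_card u v (by exact_mod_cast hd.bot_lt : (0 : ℤ) < d) c
    simp only [Int.modEq_comm (b := c), Int.modEq_iff_dvd] at h
    exact_mod_cast h
  have hcard : ((Ioc u v).card : ℚ) = v - u := by exact_mod_cast Int.card_Ioc_of_le u v huv
  have hnonneg : 0 ≤ ((v : ℚ) - u) / d :=
    div_nonneg (sub_nonneg.2 (by exact_mod_cast huv)) d.cast_nonneg
  suffices h : (((Ioc u v).filter fun n => (d : ℤ) ∣ n - c).card : ℚ) ≤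
      ((Ioc u v).card : ℚ) / d + 1 by
    have hreal := (Rat.cast_le (K := ℝ)).2 h
    push_cast at hreal
    exact hreal
  rw [hcount, hcard]
  refine max_le ?_ (by linarith)
  have hv := Int.floor_le (((v : ℚ) - c) / d)
  have hu := (Int.lt_floor_add_one (((u : ℚ) - c) / d)).le
  have hsub : ((v : ℚ) - c) / d - ((u : ℚ) - c) / d = ((v : ℚ) - u) / d := by ring
  push_cast
  linarith

theorem prod_ite_dvd_of_pairwise_coprime {T : Finset ℕ}
    (hT : (T : Set ℕ).Pairwise Nat.Coprime) (a : ℕ → ℝ) (m : ℤ) :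
    ∏ p ∈ T, (if (p : ℤ) ∣ m then a p else 0) =
      if ((∏ p ∈ T, p : ℕ) : ℤ) ∣ m then ∏ p ∈ T, a p else 0 := by
  by_cases h : ∀ p ∈ T, (p : ℤ) ∣ m
  · rw [if_pos, prod_congr rfl fun p hp => if_pos (h p hp)]
    rw [Nat.cast_prod]
    exact prod_dvd_of_coprime (fun p hp r hr hpr => Nat.isCoprime_iff_coprime.2 (hT hp hr hpr)) h
  · obtain ⟨p, hp, hpm⟩ := not_forall₂.1 h
    rw [if_neg fun hdvd => hpm
      ((Int.natCast_dvd_natCast.2 (dvd_prod_of_mem _ hp)).trans hdvd)]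
    exact prod_eq_zero hp (if_neg hpm)

theorem sum_Ioc_prod_one_add_ite_dvd_le {T : Finset ℕ} (hT : (T : Set ℕ).Pairwise Nat.Coprime)
    (hT0 : ∀ p ∈ T, p ≠ 0) {a : ℕ → ℝ} (ha : ∀ p ∈ T, 0 ≤ a p) (u v c : ℤ) :
    ∑ n ∈ Ioc u v, ∏ p ∈ T, (1 + if (p : ℤ) ∣ n - c then a p else 0) ≤
      (Ioc u v).card * ∏ p ∈ T, (1 + a p / p) + ∏ p ∈ T, (1 + a p) := by
  simp only [prod_one_add]
  rw [sum_comm, mul_sum, ← sum_add_distrib]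
  refine sum_le_sum fun D hD => ?_
  have hDT := mem_powerset.1 hD
  have hd : ∏ p ∈ D, p ≠ 0 := prod_ne_zero_iff.2 fun p hp => hT0 p (hDT hp)
  calc ∑ n ∈ Ioc u v, ∏ p ∈ D, (if (p : ℤ) ∣ n - c then a p else 0)
      = ((Ioc u v).filter fun n => ((∏ p ∈ D, p : ℕ) : ℤ) ∣ n - c).card * ∏ p ∈ D, a p := by
        simp only [prod_ite_dvd_of_pairwise_coprime (hT.mono (coe_subset.2 hDT))]
        rw [← sum_filter, sum_const, nsmul_eq_mul]
    _ ≤ ((Ioc u v).card / (∏ p ∈ D, p : ℕ) + 1) * ∏ p ∈ D, a p :=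
        mul_le_mul_of_nonneg_right (card_filter_dvd_sub_le hd u v c)
          (prod_nonneg fun p hp => ha p (hDT hp))
    _ = (Ioc u v).card * ∏ p ∈ D, a p / p + ∏ p ∈ D, a p := by
        rw [prod_div_distrib, Nat.cast_prod]
        ring

theorem exp_mul_sumInvPrimeDivisors_le {w z B A : ℝ} (hw : 0 < w) (hB : 0 ≤ B)
    (hA : B * Real.exp (B / w) ≤ A) (m : ℤ) :
    Real.exp (B * sumInvPrimeDivisors w z m) ≤
      ∏ p ∈ primesBetween w z, (1 + if (p : ℤ) ∣ m then A / p else 0) := by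
  rw [sumInvPrimeDivisors, sum_filter, mul_sum, Real.exp_sum]
  refine prod_le_prod (fun _ _ => by positivity) fun p hp => ?_
  split_ifs
  · obtain ⟨-, hwp, -⟩ := mem_primesBetween.1 hp
    have hp0 : (0 : ℝ) < p := hw.trans hwp
    calc Real.exp (B * (1 / p)) ≤ 1 + B * (1 / p) * Real.exp (B * (1 / p)) :=
          exp_le_one_add_mul_exp _
      _ ≤ 1 + B * (1 / p) * Real.exp (B / w) := by
          rw [mul_one_div]
          gcongr
      _ = 1 + B * Real.exp (B / w) / p := by ring
      _ ≤ 1 + A / p := by gcongr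
  · simp

theorem sum_Ioc_exp_mul_sumInvPrimeDivisors_le {w z B A : ℝ} (hw : 0 < w) (hB : 0 ≤ B)
    (hA : B * Real.exp (B / w) ≤ A) (u v c : ℤ) :
    ∑ n ∈ Ioc u v, Real.exp (B * sumInvPrimeDivisors w z (n - c)) ≤
      (Ioc u v).card * Real.exp (A * (2 / w)) +
        Real.exp (A * ∑ p ∈ primesBetween w z, 1 / (p : ℝ)) := by
  have hA0 : 0 ≤ A := le_trans (by positivity) hA
  calc ∑ n ∈ Ioc u v, Real.exp (B * sumInvPrimeDivisors w z (n - c))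
      ≤ ∑ n ∈ Ioc u v, ∏ p ∈ primesBetween w z, (1 + if (p : ℤ) ∣ n - c then A / p else 0) :=
        sum_le_sum fun n _ => exp_mul_sumInvPrimeDivisors_le hw hB hA _
    _ ≤ (Ioc u v).card * ∏ p ∈ primesBetween w z, (1 + A / p / p) +
          ∏ p ∈ primesBetween w z, (1 + A / (p : ℝ)) :=
        sum_Ioc_prod_one_add_ite_dvd_le (pairwise_coprime_primesBetween w z)
          (fun p hp => (mem_primesBetween.1 hp).1.ne_zero) (fun p _ => by positivity) u v c
    _ ≤ (Ioc u v).card * Real.exp (∑ p ∈ primesBetween w z, A / p / p) +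
          Real.exp (∑ p ∈ primesBetween w z, A / (p : ℝ)) := by
        gcongr <;> exact Real.prod_one_add_le_exp_sum _ fun p => by positivity
    _ = (Ioc u v).card * Real.exp (A * ∑ p ∈ primesBetween w z, 1 / (p : ℝ) ^ 2) +
          Real.exp (A * ∑ p ∈ primesBetween w z, 1 / (p : ℝ)) := by
        simp only [mul_sum, div_div, ← sq, mul_one_div]
    _ ≤ _ := by
        gcongr
        exact sum_inv_sq_primesBetween_le hw z

theorem sum_sum_Ioc_exp_sumInvPrimeDivisors_le {w A : ℝ} (hw : 0 < w) {k : ℕ}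
    (hA : (2 * k + 1) * k * Real.exp ((2 * k + 1) * k / w) ≤ A) (z : ℝ) (q : ℕ) (u v : ℤ) :
    ∑ n₁ ∈ Ioc u v, ∑ n₂ ∈ Ioc u v, Real.exp (k *
        ∑ l ∈ Icc (-(k : ℤ)) k, sumInvPrimeDivisors w z (n₁ - n₂ + q * l)) ≤
      (Ioc u v).card * ((Ioc u v).card * Real.exp (A * (2 / w)) +
        Real.exp (A * ∑ p ∈ primesBetween w z, 1 / (p : ℝ))) := by
  have hne : (Icc (-(k : ℤ)) k).Nonempty := ⟨0, by simp⟩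
  have hcard : ((Icc (-(k : ℤ)) k).card : ℝ) = 2 * k + 1 := by
    have h : ((Icc (-(k : ℤ)) k).card : ℤ) = 2 * k + 1 :=
      (Int.card_Icc_of_le _ _ (by omega)).trans (by ring)
    exact_mod_cast h
  rw [sum_comm, ← nsmul_eq_mul]
  refine sum_le_card_nsmul _ _ _ fun n₂ _ => ?_
  calc ∑ n₁ ∈ Ioc u v, Real.exp (k *
        ∑ l ∈ Icc (-(k : ℤ)) k, sumInvPrimeDivisors w z (n₁ - n₂ + q * l))
      ≤ ∑ n₁ ∈ Ioc u v, 𝔼 l ∈ Icc (-(k : ℤ)) k,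
          Real.exp ((2 * k + 1) * k * sumInvPrimeDivisors w z (n₁ - (n₂ - q * l))) := by
        refine sum_le_sum fun n₁ _ => ?_
        have h := exp_sum_le_expect hne
          fun l => k * sumInvPrimeDivisors w z (n₁ - n₂ + q * l)
        rw [← mul_sum, hcard] at h
        simpa only [sub_add, mul_assoc] using h
    _ = 𝔼 l ∈ Icc (-(k : ℤ)) k, ∑ n₁ ∈ Ioc u v,
          Real.exp ((2 * k + 1) * k * sumInvPrimeDivisors w z (n₁ - (n₂ - q * l))) :=
        (expect_sum_comm _ _ _).symm
    _ ≤ _ := expect_le hne fun l _ =>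
        sum_Ioc_exp_mul_sumInvPrimeDivisors_le hw (by positivity) hA u v _

end IntervalSums

section SecondMoment

theorem expect_sub_sq {ι : Type*} {s : Finset ι} (hs : s.Nonempty) (X : ι → ℝ) (μ : ℝ) :
    𝔼 i ∈ s, (X i - μ) ^ 2 = 𝔼 i ∈ s, X i ^ 2 - 2 * μ * 𝔼 i ∈ s, X i + μ ^ 2 := by
  conv_rhs => rw [mul_expect, ← expect_const hs (μ ^ 2), ← expect_sub_distrib,
    ← expect_add_distrib]
  exact expect_congr rfl fun i _ => by ring

theorem mul_one_sub_le_expect_sum_decoupledWeight {w z : ℝ} (hw : 0 < w) (hwz : w ≤ z) {k : ℕ}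
    (hk : (k : ℝ) ≤ w) (q : ℕ) (u v : ℤ) :
    (Ioc u v).card * (1 - 2 * (k : ℝ) ^ 2 / w) ≤
      𝔼 b ∈ range (PP z), ∑ n ∈ Ioc u v, decoupledWeight w z q k b b n := by
  rw [expect_sum_comm, ← nsmul_eq_mul]
  exact card_nsmul_le_sum _ _ _ fun n _ => one_sub_le_expect_decoupledWeight hw hwz hk q n

theorem expect_sum_decoupledWeight_sq_le {w z A : ℝ} (hw : 0 < w) (hwz : w ≤ z) {q k : ℕ}
    (hk : (k : ℝ) ≤ w) (hq : ∀ p ∈ primesBetween w z, ¬ p ∣ q)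
    (hA : (2 * k + 1) * k * Real.exp ((2 * k + 1) * k / w) ≤ A) (u v : ℤ) :
    𝔼 b ∈ range (PP z), (∑ n ∈ Ioc u v, decoupledWeight w z q k b b n) ^ 2 ≤
      Real.exp (8 * k / w) * ((Ioc u v).card * ((Ioc u v).card * Real.exp (A * (2 / w)) +
        Real.exp (A * ∑ p ∈ primesBetween w z, 1 / (p : ℝ)))) := by
  calc 𝔼 b ∈ range (PP z), (∑ n ∈ Ioc u v, decoupledWeight w z q k b b n) ^ 2
      = ∑ n₁ ∈ Ioc u v, ∑ n₂ ∈ Ioc u v,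
          𝔼 b ∈ range (PP z), decoupledWeight w z q k b b n₁ * decoupledWeight w z q k b b n₂ := by
        simp only [sq, sum_mul_sum, expect_sum_comm]
    _ ≤ ∑ n₁ ∈ Ioc u v, ∑ n₂ ∈ Ioc u v, Real.exp (8 * k / w) * Real.exp (k *
          ∑ l ∈ Icc (-(k : ℤ)) k, sumInvPrimeDivisors w z (n₁ - n₂ + q * l)) := by
        simp only [← Real.exp_add]
        exact sum_le_sum fun n₁ _ => sum_le_sum fun n₂ _ =>
          expect_decoupledWeight_mul_le hw hwz hk hq n₁ n₂
    _ ≤ _ := by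
        simp only [← mul_sum]
        gcongr
        exact sum_sum_Ioc_exp_sumInvPrimeDivisors_le hw hA z q u v

theorem expect_sum_decoupledWeight_sub_card_sq_le {w z A : ℝ} (hw : 0 < w) (hwz : w ≤ z) {q k : ℕ}
    (hk : (k : ℝ) ≤ w) (hq : ∀ p ∈ primesBetween w z, ¬ p ∣ q)
    (hA : (2 * k + 1) * k * Real.exp ((2 * k + 1) * k / w) ≤ A) (u v : ℤ) :
    𝔼 b ∈ range (PP z), (∑ n ∈ Ioc u v, decoupledWeight w z q k b b n - (Ioc u v).card) ^ 2 ≤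
      Real.exp (8 * k / w) * ((Ioc u v).card * ((Ioc u v).card * Real.exp (A * (2 / w)) +
        Real.exp (A * ∑ p ∈ primesBetween w z, 1 / (p : ℝ)))) -
      (Ioc u v).card ^ 2 + 4 * (Ioc u v).card ^ 2 * (k ^ 2 / w) := by
  rw [expect_sub_sq (range_PP_nonempty z)]
  have hsq := expect_sum_decoupledWeight_sq_le hw hwz hk hq hA u v
  have hmean := mul_le_mul_of_nonneg_left
    (mul_one_sub_le_expect_sum_decoupledWeight hw hwz hk q u v)
    (by positivity : (0 : ℝ) ≤ 2 * (Ioc u v).card)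
  linear_combination hsq + hmean

theorem exp_mul_exp_add_sub_one_le {c R η : ℝ} (hc : 0 ≤ c) (hη : 0 ≤ η) (hηR : η ≤ R) :
    Real.exp (8 * η) * (Real.exp (2 * c * η) + η) - 1 + 4 * η ≤
      ((8 + 2 * c) * Real.exp ((8 + 2 * c) * R) + Real.exp (8 * R) + 4) * η := by
  have hmain : Real.exp (8 * η) * Real.exp (2 * c * η) ≤
      1 + (8 + 2 * c) * η * Real.exp ((8 + 2 * c) * R) :=
    calc Real.exp (8 * η) * Real.exp (2 * c * η) = Real.exp ((8 + 2 * c) * η) := by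
          rw [← Real.exp_add, add_mul]
      _ ≤ 1 + (8 + 2 * c) * η * Real.exp ((8 + 2 * c) * η) := exp_le_one_add_mul_exp _
      _ ≤ 1 + (8 + 2 * c) * η * Real.exp ((8 + 2 * c) * R) := by gcongr
  have herror : Real.exp (8 * η) * η ≤ Real.exp (8 * R) * η := by gcongr
  linear_combination hmain + herror

theorem exists_expect_sum_decoupledWeight_sub_card_sq_le (R : ℝ) : ∃ c C : ℝ, 0 < c ∧ 0 < C ∧
    ∀ (w z η : ℝ) (q k : ℕ) (u v : ℤ), 0 < w → w ≤ z → (k : ℝ) ≤ w → (k : ℝ) ^ 2 ≤ η * w →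
      η ≤ R → (∀ p ∈ primesBetween w z, ¬ p ∣ q) →
      Real.exp (c * (η * w) * ∑ p ∈ primesBetween w z, 1 / (p : ℝ)) ≤ (Ioc u v).card * η →
      𝔼 b ∈ range (PP z), (∑ n ∈ Ioc u v, decoupledWeight w z q k b b n - (Ioc u v).card) ^ 2 ≤
        C * (Ioc u v).card ^ 2 * η := by
  obtain ⟨c, hc⟩ : ∃ c : ℝ, c = 3 * Real.exp (3 * R) := ⟨_, rfl⟩
  have hc0 : 0 < c := hc ▸ by positivity
  refine ⟨c, (8 + 2 * c) * Real.exp ((8 + 2 * c) * R) + Real.exp (8 * R) + 4, hc0, by positivity,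
    fun w z η q k u v hw hwz hk hkη hηR hq hS => ?_⟩
  have hη : 0 ≤ η := nonneg_of_mul_nonneg_left ((sq_nonneg _).trans hkη) hw
  have hkk : (k : ℝ) ≤ k ^ 2 := by exact_mod_cast Nat.le_self_pow two_ne_zero k
  have hB : (2 * (k : ℝ) + 1) * k ≤ 3 * η * w := by linarith
  have hA : (2 * (k : ℝ) + 1) * k * Real.exp ((2 * k + 1) * k / w) ≤ c * (η * w) :=
    calc (2 * (k : ℝ) + 1) * k * Real.exp ((2 * k + 1) * k / w)
        ≤ 3 * η * w * Real.exp (3 * R) := by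
          gcongr
          rw [div_le_iff₀ hw]
          exact hB.trans (mul_le_mul_of_nonneg_right (by linarith) hw.le)
      _ = c * (η * w) := by rw [hc]; ring
  have hAw : c * (η * w) * (2 / w) = 2 * c * η := by field_simp
  have hkw : 8 * (k : ℝ) / w ≤ 8 * η := by rw [div_le_iff₀ hw]; linarith
  have hkkw : (k : ℝ) ^ 2 / w ≤ η := (div_le_iff₀ hw).2 hkη
  have hvar := expect_sum_decoupledWeight_sub_card_sq_le hw hwz hk hq hA u v
  set N : ℝ := ((Ioc u v).card : ℝ)
  calc _ ≤ _ := hvar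
    _ ≤ Real.exp (8 * η) * (N * (N * Real.exp (2 * c * η) + N * η)) - N ^ 2 + 4 * N ^ 2 * η := by
        rw [hAw]
        gcongr
    _ = N ^ 2 * (Real.exp (8 * η) * (Real.exp (2 * c * η) + η) - 1 + 4 * η) := by ring
    _ ≤ N ^ 2 * (((8 + 2 * c) * Real.exp ((8 + 2 * c) * R) + Real.exp (8 * R) + 4) * η) := by
        gcongr
        exact exp_mul_exp_add_sub_one_le hc0.le hη hηR
    _ = _ := by ring

end SecondMoment

section Scales

open Filter

variable {δ ξ x H : ℝ}

theorem le_yy (hδ : 0 ≤ δ) (hx : 0 ≤ x) (hL : 1 ≤ Real.log x) : x ≤ yy δ x :=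
  (le_mul_of_one_le_right hx (Real.one_le_rpow hL hδ)).trans (Nat.le_ceil _)

theorem two_mul_log_rpow_le (hx : 0 < x) (hlow : 2 * (yy δ x : ℝ) / x ≤ H) :
    2 * Real.log x ^ δ ≤ H := by
  refine le_trans ?_ hlow
  rw [le_div_iff₀ hx, mul_assoc, mul_comm _ x]
  exact mul_le_mul_of_nonneg_left (Nat.le_ceil _) zero_le_two

theorem mul_log_log_sq_le_sqrt_log (hξ : 1 ≤ ξ) (hy : 0 < (yy δ x : ℝ)) (hL : 1 < Real.log x)
    (hH : 0 ≤ H) (hup : H ≤ yy δ x / (ξ * zz δ x)) :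
    H * Real.log (Real.log x) ^ 2 ≤ √(Real.log x) := by
  have hG : 0 < Real.log (Real.log x) := Real.log_pos hL
  have hr : 0 < √(Real.log x) := Real.sqrt_pos.2 (by linarith)
  have hratio : (yy δ x : ℝ) / (ξ * zz δ x) =
      √(Real.log x) / (ξ * Real.log (Real.log x) ^ 2) := by
    rw [zz, ← Real.sqrt_eq_rpow]
    field_simp
  rw [hratio, le_div_iff₀ (by positivity)] at hup
  calc H * Real.log (Real.log x) ^ 2 ≤ H * (ξ * Real.log (Real.log x) ^ 2) := by
        gcongr
        exact le_mul_of_one_le_left (by positivity) hξ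
    _ ≤ √(Real.log x) := hup

theorem sum_inv_primesBetween_le_log_log {z L : ℝ} (hL : 6 ≤ L) (hz : z ≤ Real.exp (2 * L))
    (w : ℝ) : ∑ p ∈ primesBetween w z, 1 / (p : ℝ) ≤ 24 * Real.log L := by
  have hlog6 : 1 ≤ Real.log 6 :=
    (Real.le_log_iff_exp_le (by norm_num)).2 (by linarith [Real.exp_one_lt_d9])
  have hlogL : Real.log 6 ≤ Real.log L := Real.log_le_log (by norm_num) hL
  calc ∑ p ∈ primesBetween w z, 1 / (p : ℝ)
      ≤ ∑ p ∈ primesUpTo z, 1 / (p : ℝ) :=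
        sum_le_sum_of_subset_of_nonneg (primesBetween_subset_primesUpTo w z)
          fun _ _ _ => by positivity
    _ ≤ 8 * (1 + Real.log (3 * (2 * L))) := sum_inv_primesUpTo_le (by linarith) hz
    _ = 8 * (1 + (Real.log 6 + Real.log L)) := by
        rw [← mul_assoc, Real.log_mul (by norm_num) (by linarith)]
        norm_num
    _ ≤ 24 * Real.log L := by linarith

theorem zz_le_exp_two_mul_log (hξ : 1 ≤ ξ) (hx : 0 < x) (hz : 0 < zz δ x) (hH : 1 ≤ H)
    (hHL : H ≤ Real.log x) (hlow : 2 * (yy δ x : ℝ) / x ≤ H) (hup : H ≤ yy δ x / (ξ * zz δ x)) :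
    zz δ x ≤ Real.exp (2 * Real.log x) := by
  rw [le_div_iff₀ (by positivity)] at hup
  rw [div_le_iff₀ hx] at hlow
  have hLx : Real.log x ≤ x := (Real.log_le_sub_one_of_pos hx).trans (sub_le_self x zero_le_one)
  calc zz δ x ≤ H * (ξ * zz δ x) := by
        rw [← mul_assoc]
        exact le_mul_of_one_le_left hz.le (one_le_mul_of_one_le_of_one_le hH hξ)
    _ ≤ yy δ x := hup
    _ ≤ H * x := by linarith [(yy δ x).cast_nonneg (α := ℝ)]
    _ ≤ x * x := by gcongr; exact hHL.trans hLx
    _ = Real.exp (2 * Real.log x) := by rw [two_mul, Real.exp_add, Real.exp_log hx]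

theorem rpow_le_zz {M : ℝ} (hx : 0 < x) (hL : 1 ≤ Real.log x) (hG : 1 ≤ Real.log (Real.log x))
    (hxy : x ≤ yy δ x) (hM : 0 ≤ M) (hH : 0 ≤ H) (hHL : H ≤ Real.log x)
    (hLM : Real.log x ^ (M + 1) ≤ Real.exp (Real.log x / 2)) : H ^ M ≤ zz δ x := by
  have hL0 : 0 < Real.log x := by linarith
  rw [zz, le_div_iff₀ (by positivity)]
  calc H ^ M * Real.log x ^ (1 / 2 : ℝ) ≤ Real.log x ^ M * Real.log x ^ (1 : ℝ) := by
        gcongr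
        norm_num
    _ = Real.log x ^ (M + 1) := (Real.rpow_add hL0 _ _).symm
    _ ≤ Real.exp (Real.log x) := hLM.trans (Real.exp_le_exp.2 (by linarith))
    _ ≤ yy δ x := (Real.exp_log hx).trans_le hxy
    _ ≤ yy δ x * Real.log (Real.log x) ^ 2 :=
        le_mul_of_one_le_right (Nat.cast_nonneg _) (one_le_pow₀ hG)

theorem exp_mul_le_yy_mul_rpow {M c S : ℝ} (hx : 0 < x) (hL : 1 ≤ Real.log x)
    (hG : 1 ≤ Real.log (Real.log x)) (hcG : 48 * c ≤ Real.log (Real.log x)) (hc : 0 ≤ c)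
    (hxy : x ≤ yy δ x) (hM : 2 ≤ M) (hH : 0 < H) (hHL : H ≤ Real.log x)
    (hHG : H * Real.log (Real.log x) ^ 2 ≤ √(Real.log x))
    (hLM : Real.log x ^ (M + 1) ≤ Real.exp (Real.log x / 2))
    (hS : S ≤ 24 * Real.log (Real.log x)) :
    Real.exp (c * H ^ 2 * S) ≤ yy δ x * H ^ (2 - M) := by
  set L := Real.log x
  set G := Real.log L
  have hexponent : c * H ^ 2 * S ≤ L / 2 :=
    calc c * H ^ 2 * S ≤ c * H ^ 2 * (24 * G) := by gcongr
      _ = 48 * c * (H ^ 2 * G) / 2 := by ring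
      _ ≤ G * (H ^ 2 * G) / 2 := by gcongr
      _ = (H * G) ^ 2 / 2 := by ring
      _ ≤ (H * G ^ 2) ^ 2 / 2 := by
          gcongr
          exact le_self_pow₀ hG two_ne_zero
      _ ≤ √L ^ 2 / 2 := by gcongr
      _ = L / 2 := by rw [Real.sq_sqrt (by linarith)]
  have hpow : H ^ (M - 2) ≤ Real.exp (L / 2) :=
    calc H ^ (M - 2) ≤ L ^ (M - 2) := Real.rpow_le_rpow hH.le hHL (by linarith)
      _ ≤ L ^ (M + 1) := Real.rpow_le_rpow_of_exponent_le hL (by linarith)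
      _ ≤ Real.exp (L / 2) := hLM
  rw [← neg_sub M 2, Real.rpow_neg hH.le, ← div_eq_mul_inv, le_div_iff₀ (by positivity)]
  calc Real.exp (c * H ^ 2 * S) * H ^ (M - 2) ≤ Real.exp (L / 2) * Real.exp (L / 2) := by gcongr
    _ = x := by rw [← Real.exp_add, add_halves, Real.exp_log hx]
    _ ≤ yy δ x := hxy

theorem eventually_rpow_le_exp_half (s : ℝ) : ∀ᶠ L : ℝ in atTop, L ^ s ≤ Real.exp (L / 2) := by
  filter_upwards [(isLittleO_rpow_exp_pos_mul_atTop s (half_pos one_pos)).bound one_pos] with L hL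
  rw [one_mul, Real.norm_of_nonneg (Real.exp_pos _).le, one_div_mul_eq_div] at hL
  exact (le_abs_self _).trans hL

theorem eventually_scale_bounds {κ M c : ℝ} (hδ : 0 < δ) (hξ : 1 ≤ ξ) (hκ : 1 ≤ κ) (hM : 2 ≤ M)
    (hc : 0 ≤ c) : ∀ᶠ x : ℝ in atTop,
      ∀ H ∈ Set.Icc (2 * (yy δ x : ℝ) / x) ((yy δ x : ℝ) / (ξ * zz δ x)),
        κ ≤ H ∧ 0 < (yy δ x : ℝ) ∧ H ^ M ≤ zz δ x ∧ zz δ x ≤ yy δ x / (ξ * H) ∧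
        Real.exp (c * H ^ 2 * ∑ p ∈ primesBetween (H ^ M) (zz δ x), 1 / (p : ℝ)) ≤
          yy δ x * H ^ (2 - M) := by
  have hlog := Real.tendsto_log_atTop
  filter_upwards [eventually_gt_atTop 0, hlog.eventually_ge_atTop 6,
    (hlog.comp hlog).eventually_ge_atTop (max 1 (48 * c)),
    ((tendsto_rpow_atTop hδ).comp hlog).eventually_ge_atTop κ,
    hlog.eventually (eventually_rpow_le_exp_half (M + 1))] with x hx hL hG hLδ hLM
  rintro H ⟨hlow, hup⟩
  simp only [Function.comp_apply] at hG hLδ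
  obtain ⟨hG1, hGc⟩ := max_le_iff.1 hG
  have hxy : x ≤ yy δ x := le_yy hδ.le hx.le (by linarith)
  have hy : 0 < (yy δ x : ℝ) := hx.trans_le hxy
  have hκH : κ ≤ H := by linarith [two_mul_log_rpow_le hx hlow]
  have hH1 : 1 ≤ H := hκ.trans hκH
  have hH0 : 0 < H := by linarith
  have hHG := mul_log_log_sq_le_sqrt_log hξ hy (by linarith) hH0.le hup
  have hHL : H ≤ Real.log x :=
    calc H ≤ H * Real.log (Real.log x) ^ 2 := le_mul_of_one_le_right hH0.le (one_le_pow₀ hG1)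
      _ ≤ √(Real.log x) := hHG
      _ ≤ Real.log x := Real.sqrt_le_self_iff.2 (Or.inr (by linarith))
  have hHz : H ^ M ≤ zz δ x :=
    rpow_le_zz hx (by linarith) hG1 hxy (by linarith) hH0.le hHL hLM
  have hz : 0 < zz δ x := (Real.rpow_pos_of_pos hH0 M).trans_le hHz
  refine ⟨hκH, hy, hHz, ?_, exp_mul_le_yy_mul_rpow hx (by linarith) hG1 hGc hc hxy hM hH0 hHL hHG
    hLM (sum_inv_primesBetween_le_log_log hL
      (zz_le_exp_two_mul_log hξ hx hz hH1 hHL hlow hup) _)⟩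
  rw [le_div_iff₀ (by positivity)] at hup ⊢
  linarith

end Scales

section Deviation

theorem le_mul_sq_deviation {X μ τ : ℝ} (hμ : 0 ≤ μ) (hτ : 0 < τ) (h : τ < |X - μ|) :
    X ≤ (μ / τ ^ 2 + 1 / τ) * (X - μ) ^ 2 := by
  have hsq : 1 ≤ (X - μ) ^ 2 / τ ^ 2 := by
    rw [one_le_div (by positivity), ← sq_abs (X - μ)]
    gcongr
  have habs : |X - μ| ≤ (X - μ) ^ 2 / τ := by
    rw [le_div_iff₀ hτ, ← sq_abs (X - μ), sq]
    gcongr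
  calc X ≤ μ * 1 + |X - μ| := by linarith [le_abs_self (X - μ)]
    _ ≤ μ * ((X - μ) ^ 2 / τ ^ 2) + (X - μ) ^ 2 / τ := by gcongr
    _ = (μ / τ ^ 2 + 1 / τ) * (X - μ) ^ 2 := by ring

theorem sum_filter_Icc_sum_sub_mul_le {f : ℤ → ℝ} (hf : ∀ n, 0 ≤ f n) {q k m : ℕ}
    (hqk : q * k ≤ m) (y : ℤ) (P : ℤ → Prop) :
    ∑ n ∈ (Icc 1 y).filter P, ∑ h ∈ Icc 1 k, f (n - q * h) ≤ k * ∑ n ∈ Ioc (-(m : ℤ)) y, f n := by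
  rw [sum_comm]
  suffices h : ∀ h ∈ Icc 1 k, ∑ n ∈ (Icc 1 y).filter P, f (n - q * h) ≤
      ∑ n ∈ Ioc (-(m : ℤ)) y, f n by
    simpa using sum_le_card_nsmul _ _ _ h
  intro h hh
  have hqh : (q : ℤ) * h ≤ m := by
    exact_mod_cast (Nat.mul_le_mul_left q (mem_Icc.1 hh).2).trans hqk
  have hqh0 : 0 ≤ (q : ℤ) * h := by positivity
  rw [← sum_image (f := f) (g := fun n : ℤ => n - q * h) fun _ _ _ _ => sub_left_inj.1]
  refine sum_le_sum_of_subset_of_nonneg (image_subset_iff.2 fun n hn => ?_) fun n _ _ => hf n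
  obtain ⟨h1n, hny⟩ := mem_Icc.1 (mem_filter.1 hn).1
  exact mem_Ioc.2 ⟨by linarith, by linarith⟩

variable {Q : Finset ℕ} {k m : ℕ} {μ τ : ℝ}

theorem sum_sum_filter_lt_abs_sub_le {f : ℕ → ℤ → ℝ} (hf : ∀ q n, 0 ≤ f q n)
    (hQ : ∀ q ∈ Q, q * k ≤ m) (hμ : 0 ≤ μ) (hτ : 0 < τ) (y : ℤ) (P : ℤ → Prop) :
    ∑ n ∈ (Icc 1 y).filter P,
      ∑ q ∈ Q.filter (fun q => τ < |(∑ n' ∈ Ioc (-(m : ℤ)) y, f q n') - μ|),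
        ∑ h ∈ Icc 1 k, f q (n - q * h) ≤
      k * (μ / τ ^ 2 + 1 / τ) * ∑ q ∈ Q, (∑ n ∈ Ioc (-(m : ℤ)) y, f q n - μ) ^ 2 := by
  rw [sum_comm, mul_sum]
  refine (sum_le_sum fun q hq => ?_).trans
    (sum_le_sum_of_subset_of_nonneg (filter_subset _ _) fun _ _ _ => by positivity)
  obtain ⟨hqQ, hbad⟩ := mem_filter.1 hq
  refine (sum_filter_Icc_sum_sub_mul_le (hf q) (hQ q hqQ) y P).trans ?_
  rw [mul_assoc]
  gcongr
  exact le_mul_sq_deviation hμ hτ hbad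

theorem expect_sum_filter_lt_abs_sub_le {ι : Type*} {s : Finset ι} {f : ι → ℕ → ℤ → ℝ} {V : ℝ}
    (hf : ∀ i q n, 0 ≤ f i q n) (hQ : ∀ q ∈ Q, q * k ≤ m) (hμ : 0 ≤ μ) (hτ : 0 < τ) (y : ℤ)
    (hV : ∀ q ∈ Q, 𝔼 i ∈ s, (∑ n ∈ Ioc (-(m : ℤ)) y, f i q n - μ) ^ 2 ≤ V) (P : ι → ℤ → Prop) :
    𝔼 i ∈ s, ∑ n ∈ (Icc 1 y).filter (P i),
      ∑ q ∈ Q.filter (fun q => τ < |(∑ n' ∈ Ioc (-(m : ℤ)) y, f i q n') - μ|),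
        ∑ h ∈ Icc 1 k, f i q (n - q * h) ≤
      k * (μ / τ ^ 2 + 1 / τ) * (Q.card * V) :=
  calc _ ≤ 𝔼 i ∈ s, k * (μ / τ ^ 2 + 1 / τ) *
          ∑ q ∈ Q, (∑ n ∈ Ioc (-(m : ℤ)) y, f i q n - μ) ^ 2 :=
        expect_le_expect fun i _ => sum_sum_filter_lt_abs_sub_le (hf i) hQ hμ hτ y (P i)
    _ = k * (μ / τ ^ 2 + 1 / τ) *
          ∑ q ∈ Q, 𝔼 i ∈ s, (∑ n ∈ Ioc (-(m : ℤ)) y, f i q n - μ) ^ 2 := by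
        rw [← mul_expect, expect_sum_comm]
    _ ≤ _ := by
        gcongr
        simpa using sum_le_card_nsmul Q _ _ hV

end Deviation

section BadPrimes

theorem EE_eq_expect (δ x : ℝ) (g : ℤ → ℝ) : EE δ x g = 𝔼 b ∈ range (PP (zz δ x)), g b := by
  rw [EE, expect_eq_sum_div_card, card_range, one_div_mul_eq_div]

variable {δ ξ x H : ℝ} {q : ℕ}

theorem mul_floor_le_of_mem_QH (hq : q ∈ QH δ ξ x H) (hH : 0 < H) (K : ℕ) :
    q * ⌊(K : ℝ) * H⌋₊ ≤ K * yy δ x := by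
  have hqH : (q : ℝ) * H ≤ yy δ x := (le_div_iff₀ hH).1 (mem_filter.1 hq).2.2.2
  have h : (q : ℝ) * ⌊(K : ℝ) * H⌋₊ ≤ K * yy δ x :=
    calc (q : ℝ) * ⌊(K : ℝ) * H⌋₊ ≤ q * (K * H) := by
          gcongr
          exact Nat.floor_le (by positivity)
      _ = K * (q * H) := by ring
      _ ≤ K * yy δ x := by gcongr
  exact_mod_cast h

theorem not_dvd_of_mem_QH {w z : ℝ} (hq : q ∈ QH δ ξ x H) (hz : z ≤ yy δ x / (ξ * H)) :
    ∀ p ∈ primesBetween w z, ¬ p ∣ q := by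
  intro p hp hpq
  obtain ⟨-, hprime, hzq, -⟩ := mem_filter.1 hq
  obtain ⟨hp, -, hpz⟩ := mem_primesBetween.1 hp
  rw [(Nat.prime_dvd_prime_iff_eq hp hprime).1 hpq] at hpz
  linarith

theorem card_Ioc_neg_mul (K y : ℕ) : ((Ioc (-((K * y : ℕ) : ℤ)) y).card : ℝ) = (K + 1) * y := by
  have hle : -((K * y : ℕ) : ℤ) ≤ y :=
    (neg_nonpos.2 (Int.natCast_nonneg _)).trans (Int.natCast_nonneg _)
  have h : ((Ioc (-((K * y : ℕ) : ℤ)) y).card : ℤ) = (K + 1) * y :=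
    (Int.card_Ioc_of_le _ _ hle).trans (by push_cast; ring)
  exact_mod_cast h

theorem exists_expect_sum_lam_sub_sq_le {K : ℕ} (hK : 1 ≤ K) : ∃ c C : ℝ, 0 < c ∧ 0 < C ∧
    ∀ (M z H : ℝ) (q y : ℕ), 2 ≤ M → K ≤ H → H ^ M ≤ z →
      (∀ p ∈ primesBetween (H ^ M) z, ¬ p ∣ q) →
      Real.exp (c * H ^ 2 * ∑ p ∈ primesBetween (H ^ M) z, 1 / (p : ℝ)) ≤ y * H ^ (2 - M) →
      𝔼 b ∈ range (PP z),
        (∑ n ∈ Ioc (-((K * y : ℕ) : ℤ)) y, lam M z K b H q n - (K + 1) * y) ^ 2 ≤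
        C * y ^ 2 * H ^ (2 - M) := by
  have hK1 : (1 : ℝ) ≤ K := by exact_mod_cast hK
  obtain ⟨c, C, hc, hC, hvar⟩ := exists_expect_sum_decoupledWeight_sub_card_sq_le ((K : ℝ) ^ 2)
  refine ⟨c * K ^ 2, C * (K + 1) ^ 2 * K ^ 2, by positivity, by positivity,
    fun M z H q y hM hKH hz hq hS => ?_⟩
  have hH1 : 1 ≤ H := hK1.trans hKH
  have hH0 : 0 < H := by linarith
  have hfloor : (⌊(K : ℝ) * H⌋₊ : ℝ) ≤ K * H := Nat.floor_le (by positivity)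
  have hHM : H ^ (2 - M) * H ^ M = H ^ 2 := by
    rw [← Real.rpow_add hH0, sub_add_cancel, Real.rpow_two]
  have h := hvar (H ^ M) z (K ^ 2 * H ^ (2 - M)) q ⌊(K : ℝ) * H⌋₊ (-((K * y : ℕ) : ℤ)) y
    (by positivity) hz ?_ ?_ ?_ hq ?_
  · simp only [lam_eq_decoupledWeight]
    rw [card_Ioc_neg_mul] at h
    exact h.trans_eq (by ring)
  · calc (⌊(K : ℝ) * H⌋₊ : ℝ) ≤ H ^ 2 := by
          rw [sq]
          exact hfloor.trans (by gcongr)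
      _ ≤ H ^ M := by
          rw [← Real.rpow_two]
          exact Real.rpow_le_rpow_of_exponent_le hH1 hM
  · rw [mul_assoc, hHM, ← mul_pow]
    gcongr
  · exact mul_le_of_le_one_right (by positivity)
      (Real.rpow_le_one_of_one_le_of_nonpos hH1 (by linarith))
  · rw [mul_assoc ((K : ℝ) ^ 2), hHM, ← mul_assoc c, card_Ioc_neg_mul]
    refine hS.trans ?_
    calc (y : ℝ) * H ^ (2 - M) = 1 * y * (1 * H ^ (2 - M)) := by ring
      _ ≤ (K + 1) * y * (K ^ 2 * H ^ (2 - M)) := by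
          gcongr
          · linarith
          · exact one_le_pow₀ hK1

theorem mul_deviation_mul_variance_le {K y N C M ε : ℝ} (hK : 0 ≤ K) (hy : 0 < y) (hN : 0 ≤ N)
    (hC : 0 ≤ C) (hε : -1 ≤ ε) (hH : 1 ≤ H) :
    K * H * ((K + 1) * y / (y / H ^ (1 + ε)) ^ 2 + 1 / (y / H ^ (1 + ε))) *
        (N * (C * y ^ 2 * H ^ (2 - M))) ≤
      K * (K + 2) * C * y * N / H ^ (M - 5 - 2 * ε) := by
  have hH0 : 0 < H := by linarith
  have hT : 1 ≤ H ^ (1 + ε) := Real.one_le_rpow hH (by linarith)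
  have hpow : H * (H ^ (1 + ε)) ^ 2 * H ^ (2 - M) = (H ^ (M - 5 - 2 * ε))⁻¹ := by
    rw [← Real.rpow_natCast, ← Real.rpow_mul hH0.le, ← Real.rpow_one_add' hH0.le,
      ← Real.rpow_add hH0, ← Real.rpow_neg hH0.le]
    · congr 1
      push_cast
      ring
    · push_cast
      linarith
  set T := H ^ (1 + ε)
  calc K * H * ((K + 1) * y / (y / T) ^ 2 + 1 / (y / T)) * (N * (C * y ^ 2 * H ^ (2 - M)))
      = K * ((K + 1) * T ^ 2 + T) * C * y * N * H * H ^ (2 - M) := by field_simp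
    _ ≤ K * ((K + 1) * T ^ 2 + T ^ 2) * C * y * N * H * H ^ (2 - M) := by
        gcongr
        exact le_self_pow₀ hT two_ne_zero
    _ = K * (K + 2) * C * y * N * (H * T ^ 2 * H ^ (2 - M)) := by ring
    _ = _ := by rw [hpow, div_eq_mul_inv]

end BadPrimes

theorem stmt16_general {δ M ξ ε : ℝ} {K : ℕ} (hδ : 0 < δ) (hK : 1 ≤ K) (hξ : 1 ≤ ξ) (hM : 2 ≤ M)
    (hε : -1 ≤ ε) :
    ∃ C : ℝ, 0 < C ∧ ∃ x₀ : ℝ, ∀ x ≥ x₀,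
      ∀ H ∈ Set.Icc (2 * (yy δ x : ℝ) / x) ((yy δ x : ℝ) / (ξ * zz δ x)),
      ∀ P : ℤ → ℤ → Prop,
      EE δ x (fun b =>
        ∑ n ∈ (Icc (1 : ℤ) (yy δ x : ℤ)).filter (P b),
          ∑ q ∈ (QH δ ξ x H).filter (fun q =>
              (yy δ x : ℝ) / H ^ (1 + ε) <
                |(∑ n' ∈ Ioc (-((K * yy δ x : ℕ) : ℤ)) (yy δ x : ℤ),
                    lam M (zz δ x) K b H q n') - ((K : ℝ) + 1) * (yy δ x : ℝ)|),
            ∑ h ∈ Icc 1 ⌊(K : ℝ) * H⌋₊, lam M (zz δ x) K b H q (n - (q : ℤ) * (h : ℤ))) ≤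
        C * (yy δ x : ℝ) * ((QH δ ξ x H).card : ℝ) / H ^ (M - 5 - 2 * ε) := by
  obtain ⟨c, C, hc, hC, hvar⟩ := exists_expect_sum_lam_sub_sq_le hK
  obtain ⟨x₀, hx₀⟩ := Filter.eventually_atTop.1
    (eventually_scale_bounds hδ hξ (Nat.one_le_cast.2 hK : (1 : ℝ) ≤ K) hM hc.le)
  refine ⟨K * (K + 2) * C, by positivity, x₀, fun x hx H hH P => ?_⟩
  obtain ⟨hKH, hy, hwz, hzq, hexp⟩ := hx₀ x hx H hH
  have hH1 : 1 ≤ H := (Nat.one_le_cast.2 hK).trans hKH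
  have hH0 : 0 < H := by linarith
  rw [EE_eq_expect]
  refine (expect_sum_filter_lt_abs_sub_le (fun _ _ _ => lam_nonneg _ _ _ _ _ _ _)
    (fun q hq => mul_floor_le_of_mem_QH hq hH0 K) (by positivity) (by positivity) _
    (fun q hq => hvar M _ H q _ hM hKH hwz (not_dvd_of_mem_QH hq hzq) hexp)
    fun b => P b).trans ?_
  refine le_trans ?_ (mul_deviation_mul_variance_le (Nat.cast_nonneg K) hy (Nat.cast_nonneg _)
    hC.le hε hH1)
  gcongr
  exact Nat.floor_le (by positivity)

theorem stmt16 (δ M : ℝ) (K : ℕ) (ξ ε : ℝ)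
    (hδ0 : 0 < δ) (hδ1 : δ < 1/2) (hK : 2 ≤ K) (hξ : 1 < ξ) (hM : 2 ≤ M) (hε : 0 < ε) :
    ∃ C : ℝ, 0 < C ∧ ∃ x₀ : ℝ, ∀ x ≥ x₀, ∀ H ∈ frakH1 δ ξ x,
      EE δ x (fun b =>
        ∑ n ∈ (Finset.Icc (1 : ℤ) (yy δ x : ℤ)).filter (inS (zz δ x) b),
          ∑ q ∈ (QH δ ξ x H).filter (fun q =>
              (yy δ x : ℝ) / H ^ (1 + ε) <
                |(∑ n' ∈ Finset.Ioc (-((K * yy δ x : ℕ) : ℤ)) ((yy δ x : ℤ)),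
                    lam M (zz δ x) K b H q n') - ((K : ℝ) + 1) * (yy δ x : ℝ)|),
            ∑ h ∈ Finset.Icc 1 ⌊(K : ℝ) * H⌋₊,
              lam M (zz δ x) K b H q (n - (q : ℤ) * (h : ℤ))) ≤
        C * (yy δ x : ℝ) * ((QH δ ξ x H).card : ℝ) / H ^ (M - 5 - 2 * ε) := by
  obtain ⟨C, hC, x₀, h⟩ := stmt16_general (ε := ε) hδ0 (by omega : 1 ≤ K) hξ.le hM (by linarith)
  exact ⟨C, hC, x₀, fun x hx H ⟨_, _, _, hlow, hup⟩ => h x hx H ⟨hlow, hup⟩ _⟩
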